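/- Fix u₁, u₂ > 0 and a₁*, a₂* ≥ 0. For δ near 0, set a₁ = a₁* + δ/u₁ and a₂ = a₂* - δ/u₂. Let G₁ ~ Gamma(u₁,1), G₂ ~ Gamma(u₂,1), Z₁, Z₂ ~ Exp(1) all independent. Then for all x, ∂/∂δ P(a₁G₁ + a₂G₂ ≤ x) = (a₁ - a₂) ∂²/∂x² P(a₁(G₁+Z₁) + a₂(G₂+Z₂) ≤ x). -/

import Mathlib

open MeasureTheory ProbabilityTheory

/-!
For `G ~ Gamma(q, 1)` let `P_q(c, x) = ℙ(c G ≤ x)`, and let `p_q` and `D_q` be its first two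
derivatives in `x`. For `x > 0`, `∂P_q/∂c = -q p_{q+1}` and `∂p_q/∂c = -q D_{q+1}`, also at `c = 0`.

If `S ~ Gamma(u₁ + u₂, 1)` and `B ~ Beta(u₁, u₂)` are independent, then `(G₁, G₂)` has the law of
`(S B, S (1 - B))`, so `ℙ(a₁ G₁ + a₂ G₂ ≤ x) = 𝔼[P_{u₁+u₂}(a₁ B + a₂ (1 - B), x)]`. Its derivative
in `δ` is `-(u₁ + u₂) 𝔼[(B / u₁ - (1 - B) / u₂) p_{u₁+u₂+1}]`, which Stein's identity for the beta
distribution turns into `(a₁ - a₂) 𝔼[D_{u₁+u₂+2}]` with `B ~ Beta(u₁ + 1, u₂ + 1)`. That is the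
second derivative on the right-hand side, because `Gᵢ + Zᵢ ~ Gamma(uᵢ + 1, 1)`.

The same computation for `-a₁ G₁ - a₂ G₂`, whose scales have the opposite signs, gives `x < 0`. At
`x = 0` the distribution functions are extremal and both sides vanish.
-/

section Perturbation

open Real Set Filter Topology
open scoped ENNReal

section Gamma

variable {a r x : ℝ}

lemma mul_gammaPDFReal_add_one (ha : 0 < a) (hr : 0 < r) :
    a * gammaPDFReal (a + 1) r x = r * x * gammaPDFReal a r x := by
  rcases lt_trichotomy x 0 with hx | rfl | hx
  · simp [gammaPDFReal, hx.not_ge]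
  · simp [gammaPDFReal, ha.ne']
  · rw [gammaPDFReal, gammaPDFReal, if_pos hx.le, if_pos hx.le, Gamma_add_one ha.ne',
      add_sub_cancel_right, rpow_add_one hr.ne', rpow_sub_one hx.ne']
    field_simp

lemma hasDerivAt_gammaPDFReal (ha : 0 < a) (hr : 0 < r) (hx : x ≠ 0) :
    HasDerivAt (gammaPDFReal a r)
      (((a - 1) * gammaPDFReal a r x - a * gammaPDFReal (a + 1) r x) / x) x := by
  rw [mul_gammaPDFReal_add_one ha hr]
  rcases hx.lt_or_gt with hneg | hpos
  · have hzero : gammaPDFReal a r =ᶠ[𝓝 x] fun _ => 0 := by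
      filter_upwards [Iio_mem_nhds hneg] with z hz using if_neg (not_le.2 hz)
    simpa [hzero.eq_of_nhds] using (hasDerivAt_const x (0 : ℝ)).congr_of_eventuallyEq hzero
  · have hformula : gammaPDFReal a r =ᶠ[𝓝 x]
        fun z => r ^ a / Gamma a * z ^ (a - 1) * exp (-(r * z)) := by
      filter_upwards [Ioi_mem_nhds hpos] with z hz using if_pos hz.le
    rw [hformula.eq_of_nhds]
    refine HasDerivAt.congr_of_eventuallyEq ?_ hformula
    convert! ((hasDerivAt_rpow_const (p := a - 1) (Or.inl hx)).const_mul (r ^ a / Gamma a)).mul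
      ((hasDerivAt_id x).const_mul r).neg.exp using 1
    rw [rpow_sub_one hx (a - 1)]
    simp only [id, Pi.neg_apply]
    field_simp
    ring

lemma exists_gammaPDFReal_add_one_le (ha : 0 < a) (hr : 0 < r) :
    ∃ K, ∀ x, gammaPDFReal (a + 1) r x ≤ K := by
  have := Gamma_pos_of_pos (add_pos ha one_pos)
  refine ⟨r ^ (a + 1) / Gamma (a + 1) * (a / r) ^ a, fun x => ?_⟩
  rw [gammaPDFReal]
  split_ifs with hx
  · have hexp : x ^ a ≤ (a / r) ^ a * exp (r * x) := by
      simpa [abs_of_nonneg hx, hx, hr.le, mul_nonneg] using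
        rpow_abs_le_mul_max_exp_of_pos x ha.le hr
    rw [add_sub_cancel_right, mul_assoc, exp_neg, ← div_eq_mul_inv]
    gcongr
    exact (div_le_iff₀ (exp_pos _)).2 hexp
  · positivity

lemma integrable_gammaPDFReal (ha : 0 < a) (hr : 0 < r) : Integrable (gammaPDFReal a r) := by
  refine ⟨(measurable_gammaPDFReal a r).aestronglyMeasurable, ?_⟩
  rw [hasFiniteIntegral_iff_ofReal (ae_of_all _ (gammaPDFReal_nonneg ha hr))]
  exact (lintegral_gammaPDF_eq_one ha hr).trans_lt ENNReal.one_lt_top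

lemma hasDerivAt_cdf_gammaMeasure (ha : 0 < a) (hr : 0 < r) (hx : x ≠ 0) :
    HasDerivAt (cdf (gammaMeasure a r)) (gammaPDFReal a r x) x := by
  have hint := integrable_gammaPDFReal ha hr
  have hFTC := intervalIntegral.integral_hasDerivAt_right (a := 0) hint.intervalIntegrable
    (measurable_gammaPDFReal a r).stronglyMeasurable.stronglyMeasurableAtFilter
    (hasDerivAt_gammaPDFReal ha hr hx).continuousAt
  refine (hFTC.const_add (∫ z in Iic 0, gammaPDFReal a r z)).congr_of_eventuallyEq
    (Eventually.of_forall fun z => ?_)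
  beta_reduce
  rw [cdf_gammaMeasure_eq_integral ha hr,
    ← intervalIntegral.integral_Iic_sub_Iic hint.integrableOn hint.integrableOn,
    add_sub_cancel]

lemma ae_gammaMeasure_pos : ∀ᵐ x ∂(gammaMeasure a r), 0 < x := by
  have hnull : gammaMeasure a r (Iic 0) = 0 := by
    rw [gammaMeasure, withDensity_apply _ measurableSet_Iic, ← setLIntegral_congr Iio_ae_eq_Iic,
      lintegral_gammaPDF_of_nonpos le_rfl]
  filter_upwards [measure_eq_zero_iff_ae_notMem.1 hnull] with x hx using not_le.1 hx

end Gamma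

/-- The density at `y` of `c * G` for `G ~ Gamma(a, 1)` and a scale `c` of either sign. At `c = 0`,
where there is no density, division by zero makes it vanish. -/
noncomputable def scaledGammaPDF (a c y : ℝ) : ℝ := gammaPDFReal a 1 (y / c) / |c|

/-- The derivative in `y` of `scaledGammaPDF a c y`, for `0 < y`. -/
noncomputable def scaledGammaPDFDeriv (a c y : ℝ) : ℝ :=
  ((a - 1) * scaledGammaPDF a c y - a * scaledGammaPDF (a + 1) c y) / y

/-- The distribution function at `y` of `c * G` for `G ~ Gamma(a, 1)`. -/
noncomputable def scaledGammaCDF (a c y : ℝ) : ℝ := (gammaMeasure a 1).real {g | c * g ≤ y}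

section ScaledGamma

variable {a c y : ℝ}

@[fun_prop]
lemma measurable_scaledGammaPDF : Measurable fun c => scaledGammaPDF a c y :=
  ((measurable_gammaPDFReal a 1).comp (by fun_prop)).div (by fun_prop)

@[fun_prop]
lemma measurable_scaledGammaPDFDeriv : Measurable fun c => scaledGammaPDFDeriv a c y := by
  unfold scaledGammaPDFDeriv
  fun_prop

lemma scaledGammaPDF_of_nonpos (hy : 0 < y) (hc : c ≤ 0) : scaledGammaPDF a c y = 0 := by
  rcases hc.eq_or_lt with rfl | hc
  · simp [scaledGammaPDF]
  · simp [scaledGammaPDF, gammaPDFReal, (div_neg_of_pos_of_neg hy hc).not_ge]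

lemma scaledGammaPDF_of_pos (hc : 0 < c) : scaledGammaPDF a c y = gammaPDFReal a 1 (y / c) / c := by
  rw [scaledGammaPDF, abs_of_pos hc]

lemma scaledGammaPDF_nonneg (ha : 0 < a) : 0 ≤ scaledGammaPDF a c y :=
  div_nonneg (gammaPDFReal_nonneg ha one_pos _) (abs_nonneg c)

lemma mul_scaledGammaPDF (ha : 0 < a) (hy : 0 < y) :
    y * scaledGammaPDF a c y = a * c * scaledGammaPDF (a + 1) c y := by
  rcases le_or_gt c 0 with hc | hc
  · simp [scaledGammaPDF_of_nonpos hy hc]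
  · have hrec := mul_gammaPDFReal_add_one (x := y / c) ha one_pos
    rw [scaledGammaPDF_of_pos hc, scaledGammaPDF_of_pos hc]
    field_simp at hrec ⊢
    exact hrec.symm

lemma exists_norm_scaledGammaPDF_le (ha : 0 < a) :
    ∃ K, 0 ≤ K ∧ ∀ c y, 0 < y → ‖scaledGammaPDF a c y‖ ≤ K / y := by
  obtain ⟨K, hK⟩ := exists_gammaPDFReal_add_one_le ha one_pos
  have hK0 : 0 ≤ K := (gammaPDFReal_nonneg (by positivity) one_pos 0).trans (hK 0)
  refine ⟨a * K, by positivity, fun c y hy => ?_⟩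
  rw [norm_of_nonneg (scaledGammaPDF_nonneg ha), le_div_iff₀' hy]
  rcases le_or_gt c 0 with hc | hc
  · rw [scaledGammaPDF_of_nonpos hy hc, mul_zero]
    positivity
  · calc y * scaledGammaPDF a c y = a * gammaPDFReal (a + 1) 1 (y / c) := by
          rw [mul_gammaPDFReal_add_one ha one_pos, scaledGammaPDF_of_pos hc]
          ring
      _ ≤ a * K := by gcongr; exact hK _

lemma exists_norm_scaledGammaPDFDeriv_le (ha : 0 < a) :
    ∃ K, 0 ≤ K ∧ ∀ c y, 0 < y → ‖scaledGammaPDFDeriv a c y‖ ≤ K / y ^ 2 := by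
  obtain ⟨K, hK0, hK⟩ := exists_norm_scaledGammaPDF_le ha
  obtain ⟨K', hK'0, hK'⟩ := exists_norm_scaledGammaPDF_le (add_pos ha one_pos)
  refine ⟨|a - 1| * K + a * K', by positivity, fun c y hy => ?_⟩
  calc ‖scaledGammaPDFDeriv a c y‖
      ≤ (|a - 1| * ‖scaledGammaPDF a c y‖ + a * ‖scaledGammaPDF (a + 1) c y‖) / y := by
        rw [scaledGammaPDFDeriv, norm_div, norm_of_nonneg hy.le]
        gcongr
        refine (norm_sub_le _ _).trans_eq ?_
        rw [norm_mul, norm_mul, norm_of_nonneg ha.le, Real.norm_eq_abs (a - 1)]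
    _ ≤ (|a - 1| * (K / y) + a * (K' / y)) / y := by
        gcongr
        exacts [hK c y hy, hK' c y hy]
    _ = (|a - 1| * K + a * K') / y ^ 2 := by ring

lemma hasDerivAt_scaledGammaPDF_right (ha : 0 < a) (hy : 0 < y) :
    HasDerivAt (fun y => scaledGammaPDF a c y) (scaledGammaPDFDeriv a c y) y := by
  rcases eq_or_ne c 0 with rfl | hc
  · simpa [scaledGammaPDF, scaledGammaPDFDeriv] using hasDerivAt_const y (0 : ℝ)
  · convert! ((hasDerivAt_gammaPDFReal ha one_pos (div_ne_zero hy.ne' hc)).comp y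
      ((hasDerivAt_id y).div_const c)).div_const |c| using 1
    rw [scaledGammaPDFDeriv, scaledGammaPDF, scaledGammaPDF]
    field_simp

lemma hasDerivAt_scaledGammaPDF_left_zero (ha : 0 < a) (hy : 0 < y) :
    HasDerivAt (fun c => scaledGammaPDF a c y) 0 0 := by
  obtain ⟨K, -, hK⟩ := exists_norm_scaledGammaPDF_le (a := a + 1 + 1) (by positivity)
  suffices h : (fun c => scaledGammaPDF a c y) =O[𝓝 0] fun c => ‖c - 0‖ ^ 2 by
    simpa using (h.hasFDerivAt one_lt_two).hasDerivAt
  refine .of_bound (a * (a + 1) / y ^ 2 * (K / y)) (Eventually.of_forall fun c => ?_)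
  have hc : scaledGammaPDF a c y =
      a * (a + 1) / y ^ 2 * scaledGammaPDF (a + 1 + 1) c y * c ^ 2 := by
    have h := mul_scaledGammaPDF (c := c) ha hy
    have h' := mul_scaledGammaPDF (c := c) (add_pos ha one_pos) hy
    field_simp
    linear_combination y * h + a * c * h'
  have hnonneg : 0 ≤ a * (a + 1) / y ^ 2 := by positivity
  rw [hc, norm_mul, norm_mul, norm_of_nonneg hnonneg]
  simp only [sub_zero, norm_pow, norm_norm]
  gcongr
  exact hK c y hy

lemma hasDerivAt_scaledGammaPDF_left_of_pos (ha : 0 < a) (hc : 0 < c) (hy : 0 < y) :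
    HasDerivAt (fun c => scaledGammaPDF a c y) (-(a * scaledGammaPDFDeriv (a + 1) c y)) c := by
  have hformula : (fun c => scaledGammaPDF a c y) =ᶠ[𝓝 c]
      fun c => gammaPDFReal a 1 (y / c) / c := by
    filter_upwards [Ioi_mem_nhds hc] with d hd using scaledGammaPDF_of_pos hd
  refine HasDerivAt.congr_of_eventuallyEq ?_ hformula
  convert! ((hasDerivAt_gammaPDFReal ha one_pos (div_ne_zero hy.ne' hc.ne')).comp c
    ((hasDerivAt_const c y).div (hasDerivAt_id c) hc.ne')).div (hasDerivAt_id c) hc.ne' using 1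
  have hrec := mul_gammaPDFReal_add_one (x := y / c) ha one_pos
  have hrec' := mul_gammaPDFReal_add_one (x := y / c) (add_pos ha one_pos) one_pos
  rw [scaledGammaPDFDeriv, scaledGammaPDF_of_pos hc, scaledGammaPDF_of_pos hc]
  simp only [id, Function.comp_apply]
  field_simp at hrec hrec' ⊢
  linear_combination a * hrec' - a * hrec

lemma hasDerivAt_scaledGammaPDF_left (ha : 0 < a) (hy : 0 < y) :
    HasDerivAt (fun c => scaledGammaPDF a c y) (-(a * scaledGammaPDFDeriv (a + 1) c y)) c := by
  rcases lt_trichotomy c 0 with hc | rfl | hc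
  · have hzero : (fun c => scaledGammaPDF a c y) =ᶠ[𝓝 c] fun _ => 0 := by
      filter_upwards [Iio_mem_nhds hc] with d hd using scaledGammaPDF_of_nonpos hy (le_of_lt hd)
    simpa [scaledGammaPDFDeriv, scaledGammaPDF_of_nonpos hy hc.le] using
      (hasDerivAt_const c (0 : ℝ)).congr_of_eventuallyEq hzero
  · simpa [scaledGammaPDFDeriv, scaledGammaPDF] using hasDerivAt_scaledGammaPDF_left_zero ha hy
  · exact hasDerivAt_scaledGammaPDF_left_of_pos ha hc hy

@[fun_prop]
lemma measurable_scaledGammaCDF : Measurable fun c => scaledGammaCDF a c y := by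
  unfold scaledGammaCDF gammaMeasure
  have hs : MeasurableSet {p : ℝ × ℝ | p.1 * p.2 ≤ y} :=
    measurableSet_le (by fun_prop) (by fun_prop)
  exact (measurable_measure_prodMk_left hs).ennreal_toReal

lemma scaledGammaCDF_of_pos (ha : 0 < a) (hc : 0 < c) :
    scaledGammaCDF a c y = cdf (gammaMeasure a 1) (y / c) := by
  have := isProbabilityMeasure_gammaMeasure ha one_pos
  rw [cdf_eq_real, scaledGammaCDF]
  congr 1
  ext g
  simp [le_div_iff₀' hc]

lemma scaledGammaCDF_of_nonpos (ha : 0 < a) (hy : 0 < y) (hc : c ≤ 0) :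
    scaledGammaCDF a c y = 1 := by
  have := isProbabilityMeasure_gammaMeasure ha one_pos
  refine (measureReal_congr (eventuallyEq_univ.2 ?_)).trans (probReal_univ (μ := gammaMeasure a 1))
  filter_upwards [ae_gammaMeasure_pos] with g hg
  exact (mul_nonpos_of_nonpos_of_nonneg hc hg.le).trans hy.le

lemma scaledGammaCDF_neg (ha : 0 < a) (hy : y ≠ 0) :
    scaledGammaCDF a (-c) (-y) = 1 - scaledGammaCDF a c y := by
  have := isProbabilityMeasure_gammaMeasure ha one_pos
  have : NullSingletonClass (gammaMeasure a 1) := nullSingletonClass_withDensity _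
  have hatom : gammaMeasure a 1 {g | c * g = y} = 0 := by
    refine Set.Subsingleton.measure_zero (fun g hg g' hg' => ?_) _
    have hc : c ≠ 0 := by rintro rfl; exact hy (by simpa using hg.symm)
    exact mul_left_cancel₀ hc (hg.trans hg'.symm)
  rw [scaledGammaCDF, scaledGammaCDF, ← probReal_compl_eq_one_sub
    (measurableSet_le (by fun_prop) (by fun_prop))]
  refine measureReal_congr ?_
  filter_upwards [measure_eq_zero_iff_ae_notMem.1 hatom] with g hg
  refine propext ?_
  change -c * g ≤ -y ↔ ¬ c * g ≤ y
  rw [neg_mul, neg_le_neg_iff, not_le]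
  exact (Ne.symm hg).le_iff_lt

lemma hasDerivAt_scaledGammaCDF_right (ha : 0 < a) (hy : 0 < y) :
    HasDerivAt (fun y => scaledGammaCDF a c y) (scaledGammaPDF a c y) y := by
  rcases le_or_gt c 0 with hc | hc
  · rw [scaledGammaPDF_of_nonpos hy hc]
    refine (hasDerivAt_const y (1 : ℝ)).congr_of_eventuallyEq ?_
    filter_upwards [Ioi_mem_nhds hy] with z hz using scaledGammaCDF_of_nonpos ha hz hc
  · simp only [scaledGammaCDF_of_pos ha hc, scaledGammaPDF_of_pos hc]
    convert! (hasDerivAt_cdf_gammaMeasure ha one_pos (div_pos hy hc).ne').comp y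
      ((hasDerivAt_id y).div_const c) using 1
    ring

lemma hasDerivAt_scaledGammaCDF_left_of_ne_zero (ha : 0 < a) (hy : 0 < y) (hc : c ≠ 0) :
    HasDerivAt (fun c => scaledGammaCDF a c y) (-(a * scaledGammaPDF (a + 1) c y)) c := by
  rcases hc.lt_or_gt with hneg | hpos
  · rw [scaledGammaPDF_of_nonpos hy hneg.le, mul_zero, neg_zero]
    refine (hasDerivAt_const c (1 : ℝ)).congr_of_eventuallyEq ?_
    filter_upwards [Iio_mem_nhds hneg] with d hd using scaledGammaCDF_of_nonpos ha hy (le_of_lt hd)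
  · have hformula : (fun c => scaledGammaCDF a c y) =ᶠ[𝓝 c]
        fun c => cdf (gammaMeasure a 1) (y / c) := by
      filter_upwards [Ioi_mem_nhds hpos] with d hd using scaledGammaCDF_of_pos ha hd
    refine HasDerivAt.congr_of_eventuallyEq ?_ hformula
    convert! (hasDerivAt_cdf_gammaMeasure ha one_pos (div_pos hy hpos).ne').comp c
      ((hasDerivAt_const c y).div (hasDerivAt_id c) hc) using 1
    rw [scaledGammaPDF_of_pos hpos, ← mul_div_assoc, mul_gammaPDFReal_add_one ha one_pos]
    field_simp
    ring

lemma continuousAt_scaledGammaCDF_left_zero (ha : 0 < a) (hy : 0 < y) :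
    ContinuousAt (fun c => scaledGammaCDF a c y) 0 := by
  rw [ContinuousAt, scaledGammaCDF_of_nonpos ha hy le_rfl, ← nhdsLE_sup_nhdsGT, tendsto_sup]
  constructor
  · refine tendsto_const_nhds.congr' ?_
    filter_upwards [self_mem_nhdsWithin] with c hc using (scaledGammaCDF_of_nonpos ha hy hc).symm
  · refine ((tendsto_cdf_atTop (gammaMeasure a 1)).comp
      (tendsto_inv_nhdsGT_zero.const_mul_atTop hy)).congr' ?_
    filter_upwards [self_mem_nhdsWithin] with c hc
    rw [scaledGammaCDF_of_pos ha hc, Function.comp, div_eq_mul_inv]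

lemma hasDerivAt_scaledGammaCDF_left (ha : 0 < a) (hy : 0 < y) :
    HasDerivAt (fun c => scaledGammaCDF a c y) (-(a * scaledGammaPDF (a + 1) c y)) c := by
  rcases eq_or_ne c 0 with rfl | hc
  · exact hasDerivAt_of_hasDerivAt_of_ne
      (fun c hc => hasDerivAt_scaledGammaCDF_left_of_ne_zero ha hy hc)
      (continuousAt_scaledGammaCDF_left_zero ha hy)
      ((hasDerivAt_scaledGammaPDF_left (add_pos ha one_pos) hy).continuousAt.const_mul a).neg
  · exact hasDerivAt_scaledGammaCDF_left_of_ne_zero ha hy hc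

lemma norm_scaledGammaCDF_le_one (ha : 0 < a) : ‖scaledGammaCDF a c y‖ ≤ 1 := by
  have := isProbabilityMeasure_gammaMeasure ha one_pos
  rw [scaledGammaCDF, norm_of_nonneg measureReal_nonneg]
  exact measureReal_le_one

end ScaledGamma

section Mixture

variable {Ω : Type*} {mΩ : MeasurableSpace Ω} {ν : Measure Ω} [IsFiniteMeasure ν]

lemma hasDerivAt_integral_of_norm_deriv_le_div_pow {F F' : ℝ → Ω → ℝ} {K y : ℝ} {n : ℕ}
    (hy : 0 < y) (hK : 0 ≤ K) (hF : ∀ z, 0 < z → Integrable (F z) ν)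
    (hF' : AEStronglyMeasurable (F' y) ν) (hbound : ∀ ω z, 0 < z → ‖F' z ω‖ ≤ K / z ^ n)
    (hderiv : ∀ ω z, 0 < z → HasDerivAt (fun z => F z ω) (F' z ω) z) :
    HasDerivAt (fun z => ∫ ω, F z ω ∂ν) (∫ ω, F' y ω ∂ν) y := by
  have hpos : ∀ z ∈ Ioi (y / 2), 0 < z := fun z hz => (half_pos hy).trans hz
  refine (hasDerivAt_integral_of_dominated_loc_of_deriv_le (bound := fun _ => K / (y / 2) ^ n)
    (Ioi_mem_nhds (half_lt_self hy)) ?_ (hF y hy) hF' (ae_of_all _ fun ω z hz => ?_)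
    (integrable_const _) (ae_of_all _ fun ω z hz => hderiv ω z (hpos z hz))).2
  · filter_upwards [Ioi_mem_nhds hy] with z hz using (hF z hz).aestronglyMeasurable
  · refine (hbound ω z (hpos z hz)).trans ?_
    gcongr
    exact le_of_lt hz

variable {c v : Ω → ℝ} {a y : ℝ}

lemma integrable_scaledGammaCDF (ha : 0 < a) (hc : Measurable c) :
    Integrable (fun ω => scaledGammaCDF a (c ω) y) ν :=
  .of_bound (measurable_scaledGammaCDF.comp hc).aestronglyMeasurable 1
    (ae_of_all _ fun _ => norm_scaledGammaCDF_le_one ha)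

lemma integrable_scaledGammaPDF (ha : 0 < a) (hy : 0 < y) (hc : Measurable c) :
    Integrable (fun ω => scaledGammaPDF a (c ω) y) ν := by
  obtain ⟨K, -, hK⟩ := exists_norm_scaledGammaPDF_le ha
  exact .of_bound (measurable_scaledGammaPDF.comp hc).aestronglyMeasurable (K / y)
    (ae_of_all _ fun ω => hK (c ω) y hy)

lemma integrable_scaledGammaPDFDeriv (ha : 0 < a) (hy : 0 < y) (hc : Measurable c) :
    Integrable (fun ω => scaledGammaPDFDeriv a (c ω) y) ν := by
  obtain ⟨K, -, hK⟩ := exists_norm_scaledGammaPDFDeriv_le ha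
  exact .of_bound (measurable_scaledGammaPDFDeriv.comp hc).aestronglyMeasurable (K / y ^ 2)
    (ae_of_all _ fun ω => hK (c ω) y hy)

lemma hasDerivAt_integral_scaledGammaCDF (ha : 0 < a) (hy : 0 < y) (hc : Measurable c) :
    HasDerivAt (fun y => ∫ ω, scaledGammaCDF a (c ω) y ∂ν)
      (∫ ω, scaledGammaPDF a (c ω) y ∂ν) y := by
  obtain ⟨K, hK0, hK⟩ := exists_norm_scaledGammaPDF_le ha
  exact hasDerivAt_integral_of_norm_deriv_le_div_pow (n := 1) hy hK0
    (fun z _ => integrable_scaledGammaCDF ha hc)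
    (integrable_scaledGammaPDF ha hy hc).aestronglyMeasurable
    (fun ω z hz => by simpa using hK (c ω) z hz)
    (fun ω z hz => hasDerivAt_scaledGammaCDF_right ha hz)

lemma hasDerivAt_integral_scaledGammaPDF (ha : 0 < a) (hy : 0 < y) (hc : Measurable c) :
    HasDerivAt (fun y => ∫ ω, scaledGammaPDF a (c ω) y ∂ν)
      (∫ ω, scaledGammaPDFDeriv a (c ω) y ∂ν) y := by
  obtain ⟨K, hK0, hK⟩ := exists_norm_scaledGammaPDFDeriv_le ha
  exact hasDerivAt_integral_of_norm_deriv_le_div_pow hy hK0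
    (fun z hz => integrable_scaledGammaPDF ha hz hc)
    (integrable_scaledGammaPDFDeriv ha hy hc).aestronglyMeasurable (fun ω z hz => hK (c ω) z hz)
    (fun ω z hz => hasDerivAt_scaledGammaPDF_right ha hz)

lemma hasDerivAt_integral_scaledGammaCDF_add_mul (ha : 0 < a) (hy : 0 < y) (hc : Measurable c)
    (hv : Measurable v) (hvi : Integrable v ν) (d : ℝ) :
    HasDerivAt (fun d => ∫ ω, scaledGammaCDF a (c ω + d * v ω) y ∂ν)
      (-(a * ∫ ω, v ω * scaledGammaPDF (a + 1) (c ω + d * v ω) y ∂ν)) d := by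
  obtain ⟨K, -, hK⟩ := exists_norm_scaledGammaPDF_le (add_pos ha one_pos)
  have hint (d : ℝ) : Integrable (fun ω => scaledGammaCDF a (c ω + d * v ω) y) ν :=
    integrable_scaledGammaCDF ha (by fun_prop)
  rw [← integral_const_mul, ← integral_neg]
  refine (hasDerivAt_integral_of_dominated_loc_of_deriv_le
    (F' := fun d ω => -(a * (v ω * scaledGammaPDF (a + 1) (c ω + d * v ω) y)))
    (bound := fun ω => a * (‖v ω‖ * (K / y))) univ_mem
    (Eventually.of_forall fun d => (hint d).aestronglyMeasurable) (hint d)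
    (Measurable.aestronglyMeasurable (by fun_prop)) (ae_of_all _ fun ω d _ => ?_)
    ((hvi.norm.mul_const _).const_mul _) (ae_of_all _ fun ω d _ => ?_)).2
  · rw [norm_neg, norm_mul, norm_mul, norm_of_nonneg ha.le]
    gcongr
    exact hK _ y hy
  · convert! (hasDerivAt_scaledGammaCDF_left ha hy).comp d
      (((hasDerivAt_id d).mul_const (v ω)).const_add (c ω)) using 1
    simp only [id]
    ring

end Mixture

section Beta

variable {α β : ℝ} {f f' g : ℝ → ℝ}

lemma beta_add_one_add_one (hα : 0 < α) (hβ : 0 < β) :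
    beta (α + 1) (β + 1) = α * β / ((α + β) * (α + β + 1)) * beta α β := by
  have hαβ : 0 < α + β := by positivity
  have : 0 < Gamma (α + β) := Gamma_pos_of_pos hαβ
  rw [beta, beta, show α + 1 + (β + 1) = α + β + 1 + 1 by ring, Gamma_add_one hα.ne',
    Gamma_add_one hβ.ne', Gamma_add_one (s := α + β + 1) (by positivity), Gamma_add_one hαβ.ne']
  field_simp

@[fun_prop]
lemma measurable_betaPDF : Measurable (betaPDF α β) :=
  (measurable_betaPDFReal α β).ennreal_ofReal

lemma betaPDF_of_notMem_Ioo {b : ℝ} (hb : b ∉ Ioo (0 : ℝ) 1) : betaPDF α β b = 0 := by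
  rw [mem_Ioo, not_and_or, not_lt, not_lt] at hb
  exact hb.elim betaPDF_eq_zero_of_nonpos betaPDF_eq_zero_of_one_le

lemma ae_betaMeasure_mem_Ioo : ∀ᵐ b ∂(betaMeasure α β), b ∈ Ioo (0 : ℝ) 1 := by
  rw [betaMeasure, ae_withDensity_iff measurable_betaPDF]
  exact ae_of_all _ fun b hb => not_not.1 fun h => hb (betaPDF_of_notMem_Ioo h)

lemma integrable_betaMeasure_of_continuousOn (hα : 0 < α) (hβ : 0 < β)
    (hg : ContinuousOn g (Icc 0 1)) : Integrable g (betaMeasure α β) := by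
  have := isProbabilityMeasureBeta hα hβ
  rw [← Measure.restrict_eq_self_of_ae_mem (μ := betaMeasure α β) (s := Icc 0 1)
    (ae_betaMeasure_mem_Ioo.mono fun _ hb => Ioo_subset_Icc_self hb)]
  exact hg.integrableOn_Icc

lemma toReal_betaPDF_smul (hα : 0 < α) (hβ : 0 < β) :
    (fun b => (betaPDF α β b).toReal • g b) =
      (Ioo 0 1).indicator fun b => 1 / beta α β * (b ^ (α - 1) * (1 - b) ^ (β - 1) * g b) := by
  ext b
  by_cases hb : b ∈ Ioo (0 : ℝ) 1
  · have := beta_pos hα hβ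
    have h0 : 0 < b := hb.1
    have h1 : 0 < 1 - b := sub_pos.2 hb.2
    rw [indicator_of_mem hb, betaPDF_of_pos_lt_one hb.1 hb.2,
      ENNReal.toReal_ofReal (by positivity), smul_eq_mul, mul_assoc, mul_assoc, mul_assoc]
  · rw [indicator_of_notMem hb, betaPDF_of_notMem_Ioo hb, ENNReal.toReal_zero, zero_smul]

lemma beta_mul_integral_betaMeasure (hα : 0 < α) (hβ : 0 < β) :
    beta α β * ∫ b, g b ∂(betaMeasure α β) =
      ∫ b in (0 : ℝ)..1, b ^ (α - 1) * (1 - b) ^ (β - 1) * g b := by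
  rw [betaMeasure, integral_withDensity_eq_integral_toReal_smul measurable_betaPDF
    (ae_of_all _ fun _ => ENNReal.ofReal_lt_top), toReal_betaPDF_smul hα hβ,
    integral_indicator measurableSet_Ioo, integral_const_mul,
    intervalIntegral.integral_of_le zero_le_one, integral_Ioc_eq_integral_Ioo, ← mul_assoc,
    mul_one_div_cancel (beta_pos hα hβ).ne', one_mul]

lemma intervalIntegrable_of_integrable_betaMeasure (hα : 0 < α) (hβ : 0 < β)
    (hg : Integrable g (betaMeasure α β)) :
    IntervalIntegrable (fun b => b ^ (α - 1) * (1 - b) ^ (β - 1) * g b) volume 0 1 := by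
  rw [betaMeasure, integrable_withDensity_iff_integrable_smul' measurable_betaPDF
    (ae_of_all _ fun _ => ENNReal.ofReal_lt_top), toReal_betaPDF_smul hα hβ,
    integrable_indicator_iff measurableSet_Ioo] at hg
  rw [intervalIntegrable_iff_integrableOn_Ioo_of_le zero_le_one]
  exact (integrable_const_mul_iff (one_div_pos.2 (beta_pos hα hβ)).ne'.isUnit _).1 hg

lemma hasDerivAt_rpow_mul_one_sub_rpow (hα : α ≠ 0) (hβ : β ≠ 0) {b : ℝ} (hb : b ∈ Ioo (0 : ℝ) 1) :
    HasDerivAt (fun b => b ^ α * (1 - b) ^ β)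
      (-(α * β * (b ^ (α - 1) * (1 - b) ^ (β - 1) * (b / α - (1 - b) / β)))) b := by
  have h0 : b ≠ 0 := hb.1.ne'
  have h1 : 1 - b ≠ 0 := (sub_pos.2 hb.2).ne'
  convert! (hasDerivAt_rpow_const (p := α) (Or.inl h0)).mul
    (((hasDerivAt_id b).const_sub 1).rpow_const (p := β) (Or.inl h1)) using 1
  simp only [id, rpow_sub_one h0, rpow_sub_one h1]
  field_simp
  ring

/-- Stein's identity for the beta distribution. -/
lemma integral_betaMeasure_div_sub_div_mul (hα : 0 < α) (hβ : 0 < β)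
    (hf : ContinuousOn f (Icc 0 1)) (hff' : ∀ b ∈ Ioo (0 : ℝ) 1, HasDerivAt f (f' b) b)
    (hf' : Integrable f' (betaMeasure (α + 1) (β + 1))) :
    ∫ b, (b / α - (1 - b) / β) * f b ∂(betaMeasure α β) =
      (∫ b, f' b ∂(betaMeasure (α + 1) (β + 1))) / ((α + β) * (α + β + 1)) := by
  have hα' : 0 < α + 1 := by positivity
  have hβ' : 0 < β + 1 := by positivity
  have hB := beta_pos hα hβ
  have hi := intervalIntegrable_of_integrable_betaMeasure hα hβ
    (integrable_betaMeasure_of_continuousOn hα hβ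
      (g := fun b => (b / α - (1 - b) / β) * f b) (by fun_prop))
  have hi' := intervalIntegrable_of_integrable_betaMeasure hα' hβ' hf'
  have hw : ContinuousOn (fun b : ℝ => b ^ α * (1 - b) ^ β) (Icc 0 1) :=
    ContinuousOn.mul (by fun_prop (disch := simp [hα.le])) (by fun_prop (disch := simp [hβ.le]))
  have hFTC := intervalIntegral.integral_eq_sub_of_hasDerivAt_of_le zero_le_one
    (f := fun b => b ^ α * (1 - b) ^ β * f b)
    (f' := fun b => b ^ (α + 1 - 1) * (1 - b) ^ (β + 1 - 1) * f' b -
      α * β * (b ^ (α - 1) * (1 - b) ^ (β - 1) * ((b / α - (1 - b) / β) * f b)))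
    (hw.mul hf) (fun b hb => ?_) (hi'.sub (hi.const_mul _))
  · rw [intervalIntegral.integral_sub hi' (hi.const_mul _), intervalIntegral.integral_const_mul,
      ← beta_mul_integral_betaMeasure hα hβ, ← beta_mul_integral_betaMeasure hα' hβ',
      beta_add_one_add_one hα hβ] at hFTC
    simp only [zero_rpow hα.ne', sub_self, zero_rpow hβ.ne', mul_zero, zero_mul] at hFTC
    refine mul_left_cancel₀ (mul_pos (mul_pos hα hβ) hB).ne' ?_
    linear_combination -hFTC
  · convert! (hasDerivAt_rpow_mul_one_sub_rpow hα.ne' hβ.ne' hb).mul (hff' b hb) using 1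
    simp only [add_sub_cancel_right]
    ring

end Beta

section GammaBeta

variable {u₁ u₂ r : ℝ}

@[fun_prop]
lemma measurable_gammaPDF : Measurable (gammaPDF u₁ r) :=
  (measurable_gammaPDFReal u₁ r).ennreal_ofReal

lemma lintegral_eq_abs_mul_lintegral_comp_mul_left {s : ℝ} (hs : s ≠ 0) {g : ℝ → ℝ≥0∞}
    (hg : Measurable g) : ∫⁻ x, g x = ENNReal.ofReal |s| * ∫⁻ b, g (s * b) := by
  conv_lhs => rw [← Real.smul_map_volume_mul_left hs]
  rw [lintegral_smul_measure, lintegral_map hg (by fun_prop), smul_eq_mul]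

/-- The Jacobian of `(s, b) ↦ (s * b, s * (1 - b))` is `|s|`. -/
lemma lintegral_lintegral_eq_abs_mul_mul_one_sub {g : ℝ → ℝ → ℝ≥0∞}
    (hg : Measurable (Function.uncurry g)) :
    ∫⁻ x, ∫⁻ y, g x y = ∫⁻ s, ∫⁻ b, ENNReal.ofReal |s| * g (s * b) (s * (1 - b)) :=
  calc
    _ = ∫⁻ x, ∫⁻ s, g x (s - x) :=
      lintegral_congr fun x => (lintegral_sub_right_eq_self (g x) x).symm
    _ = ∫⁻ s, ∫⁻ x, g x (s - x) := lintegral_lintegral_swap (by fun_prop)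
    _ = _ := by
      refine lintegral_congr_ae ?_
      filter_upwards [Measure.ae_ne volume (0 : ℝ)] with s hs
      rw [lintegral_eq_abs_mul_lintegral_comp_mul_left hs (by fun_prop),
        ← lintegral_const_mul _ (by fun_prop)]
      simp only [mul_one_sub]

lemma abs_mul_gammaPDF_mul_gammaPDF (hu₁ : 0 < u₁) (hu₂ : 0 < u₂) (hr : 0 < r) {s b : ℝ}
    (hs : s ≠ 0) (hb₀ : b ≠ 0) (hb₁ : b ≠ 1) :
    ENNReal.ofReal |s| * (gammaPDF u₁ r (s * b) * gammaPDF u₂ r (s * (1 - b))) =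
      gammaPDF (u₁ + u₂) r s * betaPDF u₁ u₂ b := by
  by_cases h : 0 < s ∧ b ∈ Ioo 0 1
  · obtain ⟨hs, hb, hb'⟩ := h
    have h1b : 0 < 1 - b := sub_pos.2 hb'
    have := Gamma_pos_of_pos hu₁
    have := Gamma_pos_of_pos hu₂
    have := Gamma_pos_of_pos (add_pos hu₁ hu₂)
    rw [gammaPDF_of_nonneg (by positivity), gammaPDF_of_nonneg (by positivity),
      gammaPDF_of_nonneg hs.le, betaPDF_of_pos_lt_one hb hb', abs_of_pos hs,
      ← ENNReal.ofReal_mul (by positivity), ← ENNReal.ofReal_mul (by positivity),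
      ← ENNReal.ofReal_mul (by positivity)]
    have hexp : exp (-(r * s)) = exp (-(r * (s * b))) * exp (-(r * (s * (1 - b)))) := by
      rw [← exp_add]
      ring_nf
    congr 1
    rw [mul_rpow hs.le hb.le, mul_rpow hs.le h1b.le, beta, hexp, rpow_add hr,
      show u₁ + u₂ - 1 = (u₁ - 1) + (u₂ - 1) + 1 by ring, rpow_add_one hs.ne', rpow_add hs]
    field_simp
  · have hneg : s * b < 0 ∨ s * (1 - b) < 0 := by
      by_contra! hn
      have hs' : 0 < s := lt_of_le_of_ne (by linarith [hn.1, hn.2]) hs.symm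
      exact h ⟨hs', (nonneg_of_mul_nonneg_right hn.1 hs').lt_of_ne hb₀.symm,
        (sub_nonneg.1 (nonneg_of_mul_nonneg_right hn.2 hs')).lt_of_ne hb₁⟩
    have hleft : gammaPDF u₁ r (s * b) * gammaPDF u₂ r (s * (1 - b)) = 0 :=
      mul_eq_zero.2 (hneg.imp gammaPDF_of_neg gammaPDF_of_neg)
    have hright : gammaPDF (u₁ + u₂) r s * betaPDF u₁ u₂ b = 0 :=
      mul_eq_zero.2 ((not_and_or.1 h).imp
        (fun hs' => gammaPDF_of_neg ((not_lt.1 hs').lt_of_ne hs)) betaPDF_of_notMem_Ioo)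
    rw [hleft, hright, mul_zero]

lemma gammaMeasure_prod_gammaMeasure (hu₁ : 0 < u₁) (hu₂ : 0 < u₂) (hr : 0 < r) :
    (gammaMeasure u₁ r).prod (gammaMeasure u₂ r) =
      ((gammaMeasure (u₁ + u₂) r).prod (betaMeasure u₁ u₂)).map
        fun p : ℝ × ℝ => (p.1 * p.2, p.1 * (1 - p.2)) := by
  have := isProbabilityMeasure_gammaMeasure hu₁ hr
  have := isProbabilityMeasure_gammaMeasure hu₂ hr
  have := isProbabilityMeasure_gammaMeasure (add_pos hu₁ hu₂) hr
  have := isProbabilityMeasureBeta hu₁ hu₂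
  unfold gammaMeasure betaMeasure at *
  refine Measure.ext_of_lintegral _ fun f hf => ?_
  rw [lintegral_map hf (by fun_prop), prod_withDensity (by fun_prop) (by fun_prop),
    prod_withDensity (by fun_prop) (by fun_prop),
    lintegral_withDensity_eq_lintegral_mul _ (by fun_prop) hf,
    lintegral_withDensity_eq_lintegral_mul _ (by fun_prop) (by fun_prop),
    lintegral_prod _ (by fun_prop), lintegral_prod _ (by fun_prop)]
  simp only [Pi.mul_apply]
  rw [lintegral_lintegral_eq_abs_mul_mul_one_sub (by fun_prop)]
  refine lintegral_congr_ae ?_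
  filter_upwards [Measure.ae_ne volume (0 : ℝ)] with s hs
  refine lintegral_congr_ae ?_
  filter_upwards [Measure.ae_ne volume (0 : ℝ), Measure.ae_ne volume (1 : ℝ)] with b hb₀ hb₁
  rw [← mul_assoc, abs_mul_gammaPDF_mul_gammaPDF hu₁ hu₂ hr hs hb₀ hb₁]

lemma gammaMeasure_conv_gammaMeasure (hu₁ : 0 < u₁) (hu₂ : 0 < u₂) (hr : 0 < r) :
    (gammaMeasure u₁ r).conv (gammaMeasure u₂ r) = gammaMeasure (u₁ + u₂) r := by
  have := isProbabilityMeasure_gammaMeasure (add_pos hu₁ hu₂) hr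
  have := isProbabilityMeasureBeta hu₁ hu₂
  have hfst : (fun x : ℝ × ℝ => x.1 + x.2) ∘ (fun p : ℝ × ℝ => (p.1 * p.2, p.1 * (1 - p.2))) =
      Prod.fst := by
    ext p
    simp only [Function.comp]
    ring
  rw [Measure.conv, gammaMeasure_prod_gammaMeasure hu₁ hu₂ hr,
    Measure.map_map (by fun_prop) (by fun_prop), hfst, Measure.map_fst_prod, measure_univ, one_smul]

end GammaBeta

/-- The distribution function at `x` of `a₁ * G₁ + a₂ * G₂`, where `G₁ ~ Gamma(u₁, 1)` and
`G₂ ~ Gamma(u₂, 1)` are independent. -/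
noncomputable def gammaCombinationCDF (u₁ u₂ a₁ a₂ x : ℝ) : ℝ :=
  ((gammaMeasure u₁ 1).prod (gammaMeasure u₂ 1)).real {p | a₁ * p.1 + a₂ * p.2 ≤ x}

section GammaCombination

variable {u₁ u₂ a₁ a₂ x : ℝ}

lemma gammaCombinationCDF_eq_integral (hu₁ : 0 < u₁) (hu₂ : 0 < u₂) :
    gammaCombinationCDF u₁ u₂ a₁ a₂ x =
      ∫ b, scaledGammaCDF (u₁ + u₂) (a₁ * b + a₂ * (1 - b)) x ∂(betaMeasure u₁ u₂) := by
  have := isProbabilityMeasure_gammaMeasure (add_pos hu₁ hu₂) one_pos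
  have := isProbabilityMeasureBeta hu₁ hu₂
  have hs : MeasurableSet {p : ℝ × ℝ | a₁ * p.1 + a₂ * p.2 ≤ x} :=
    measurableSet_le (by fun_prop) (by fun_prop)
  have hm : Measurable fun p : ℝ × ℝ => (p.1 * p.2, p.1 * (1 - p.2)) := by fun_prop
  rw [gammaCombinationCDF, gammaMeasure_prod_gammaMeasure hu₁ hu₂ one_pos,
    map_measureReal_apply hm hs, measureReal_def, Measure.prod_apply_symm (hm hs),
    ← integral_toReal (measurable_measure_prodMk_right (hm hs)).aemeasurable
      (ae_of_all _ fun _ => measure_lt_top _ _)]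
  refine integral_congr_ae (ae_of_all _ fun b => ?_)
  simp only [scaledGammaCDF, measureReal_def, preimage_ofPred_eq]
  congr! 5 with g
  ring

lemma hasDerivAt_gammaCombinationCDF (hu₁ : 0 < u₁) (hu₂ : 0 < u₂) (hx : 0 < x) :
    HasDerivAt (gammaCombinationCDF u₁ u₂ a₁ a₂)
      (∫ b, scaledGammaPDF (u₁ + u₂) (a₁ * b + a₂ * (1 - b)) x ∂(betaMeasure u₁ u₂)) x := by
  have := isProbabilityMeasureBeta hu₁ hu₂
  exact (hasDerivAt_integral_scaledGammaCDF (add_pos hu₁ hu₂) hx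
    (by fun_prop)).congr_of_eventuallyEq
      (Eventually.of_forall fun _ => gammaCombinationCDF_eq_integral hu₁ hu₂)

lemma hasDerivAt_deriv_gammaCombinationCDF (hu₁ : 0 < u₁) (hu₂ : 0 < u₂) (hx : 0 < x) :
    HasDerivAt (deriv (gammaCombinationCDF u₁ u₂ a₁ a₂))
      (∫ b, scaledGammaPDFDeriv (u₁ + u₂) (a₁ * b + a₂ * (1 - b)) x ∂(betaMeasure u₁ u₂)) x := by
  have := isProbabilityMeasureBeta hu₁ hu₂
  refine (hasDerivAt_integral_scaledGammaPDF (add_pos hu₁ hu₂) hx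
    (by fun_prop)).congr_of_eventuallyEq ?_
  filter_upwards [Ioi_mem_nhds hx] with y hy using
    (hasDerivAt_gammaCombinationCDF hu₁ hu₂ hy).deriv

lemma hasDerivAt_gammaCombinationCDF_perturb (hu₁ : 0 < u₁) (hu₂ : 0 < u₂) (hx : 0 < x) (δ : ℝ) :
    HasDerivAt (fun d => gammaCombinationCDF u₁ u₂ (a₁ + d / u₁) (a₂ - d / u₂) x)
      (-((u₁ + u₂) * ∫ b, (b / u₁ - (1 - b) / u₂) * scaledGammaPDF (u₁ + u₂ + 1)
        ((a₁ + δ / u₁) * b + (a₂ - δ / u₂) * (1 - b)) x ∂(betaMeasure u₁ u₂))) δ := by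
  have := isProbabilityMeasureBeta hu₁ hu₂
  have haffine (d b : ℝ) : (a₁ + d / u₁) * b + (a₂ - d / u₂) * (1 - b) =
      a₁ * b + a₂ * (1 - b) + d * (b / u₁ - (1 - b) / u₂) := by ring
  simp only [gammaCombinationCDF_eq_integral hu₁ hu₂, haffine]
  exact hasDerivAt_integral_scaledGammaCDF_add_mul (add_pos hu₁ hu₂) hx (by fun_prop) (by fun_prop)
    (integrable_betaMeasure_of_continuousOn hu₁ hu₂ (by fun_prop)) δ

lemma integral_betaMeasure_mul_scaledGammaPDF (hu₁ : 0 < u₁) (hu₂ : 0 < u₂) (hx : 0 < x) :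
    (u₁ + u₂) * ∫ b, (b / u₁ - (1 - b) / u₂) *
        scaledGammaPDF (u₁ + u₂ + 1) (a₁ * b + a₂ * (1 - b)) x ∂(betaMeasure u₁ u₂) =
      -((a₁ - a₂) * ∫ b, scaledGammaPDFDeriv (u₁ + u₂ + 1 + 1) (a₁ * b + a₂ * (1 - b)) x
        ∂(betaMeasure (u₁ + 1) (u₂ + 1))) := by
  have hu₁' := add_pos hu₁ one_pos
  have hu₂' := add_pos hu₂ one_pos
  have hu : 0 < u₁ + u₂ + 1 := by positivity
  have := isProbabilityMeasureBeta hu₁' hu₂'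
  have hderiv (b : ℝ) : HasDerivAt
      (fun b => scaledGammaPDF (u₁ + u₂ + 1) (a₁ * b + a₂ * (1 - b)) x)
      (-((u₁ + u₂ + 1) * (a₁ - a₂)) *
        scaledGammaPDFDeriv (u₁ + u₂ + 1 + 1) (a₁ * b + a₂ * (1 - b)) x) b := by
    convert! (hasDerivAt_scaledGammaPDF_left hu hx).comp b
      (((hasDerivAt_id b).const_mul a₁).add
        (((hasDerivAt_id b).const_sub 1).const_mul a₂)) using 1
    simp only [id, Pi.add_apply]
    ring
  rw [integral_betaMeasure_div_sub_div_mul hu₁ hu₂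
    (continuousOn_of_forall_continuousAt fun b _ => (hderiv b).continuousAt)
    (fun b _ => hderiv b) ((integrable_scaledGammaPDFDeriv (add_pos hu one_pos) hx
      (by fun_prop)).const_mul _), integral_const_mul]
  field_simp

lemma deriv_gammaCombinationCDF_perturb_of_pos (hu₁ : 0 < u₁) (hu₂ : 0 < u₂) (hx : 0 < x) (δ : ℝ) :
    deriv (fun d => gammaCombinationCDF u₁ u₂ (a₁ + d / u₁) (a₂ - d / u₂) x) δ =
      ((a₁ + δ / u₁) - (a₂ - δ / u₂)) * deriv (deriv
        (gammaCombinationCDF (u₁ + 1) (u₂ + 1) (a₁ + δ / u₁) (a₂ - δ / u₂))) x := by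
  rw [(hasDerivAt_gammaCombinationCDF_perturb hu₁ hu₂ hx δ).deriv,
    (hasDerivAt_deriv_gammaCombinationCDF (add_pos hu₁ one_pos) (add_pos hu₂ one_pos) hx).deriv,
    integral_betaMeasure_mul_scaledGammaPDF hu₁ hu₂ hx, neg_neg,
    show u₁ + 1 + (u₂ + 1) = u₁ + u₂ + 1 + 1 by ring]

lemma gammaCombinationCDF_neg (hu₁ : 0 < u₁) (hu₂ : 0 < u₂) (hx : x ≠ 0) :
    gammaCombinationCDF u₁ u₂ (-a₁) (-a₂) (-x) = 1 - gammaCombinationCDF u₁ u₂ a₁ a₂ x := by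
  have := isProbabilityMeasureBeta hu₁ hu₂
  have hu := add_pos hu₁ hu₂
  have hscale (b : ℝ) : -a₁ * b + -a₂ * (1 - b) = -(a₁ * b + a₂ * (1 - b)) := by ring
  simp only [gammaCombinationCDF_eq_integral hu₁ hu₂, hscale, scaledGammaCDF_neg hu hx]
  rw [integral_sub (integrable_const 1) (integrable_scaledGammaCDF hu (by fun_prop)),
    integral_const, probReal_univ, one_smul]

lemma deriv_deriv_gammaCombinationCDF_neg (hu₁ : 0 < u₁) (hu₂ : 0 < u₂) (hx : x ≠ 0) :
    deriv (deriv (gammaCombinationCDF u₁ u₂ (-a₁) (-a₂))) (-x) =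
      -deriv (deriv (gammaCombinationCDF u₁ u₂ a₁ a₂)) x := by
  have hneg : gammaCombinationCDF u₁ u₂ (-a₁) (-a₂) =ᶠ[𝓝 (-x)]
      fun y => 1 - gammaCombinationCDF u₁ u₂ a₁ a₂ (-y) := by
    filter_upwards [isOpen_ne.mem_nhds (neg_ne_zero.2 hx)] with y hy
    rw [← gammaCombinationCDF_neg hu₁ hu₂ (neg_ne_zero.2 hy), neg_neg]
  have hderiv : deriv (fun y => 1 - gammaCombinationCDF u₁ u₂ a₁ a₂ (-y)) =
      fun y => deriv (gammaCombinationCDF u₁ u₂ a₁ a₂) (-y) := by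
    ext y
    rw [deriv_const_sub, deriv_comp_neg, neg_neg]
  rw [hneg.deriv.deriv_eq, hderiv, deriv_comp_neg, neg_neg]

lemma deriv_gammaCombinationCDF_perturb_of_ne_zero (hu₁ : 0 < u₁) (hu₂ : 0 < u₂) (hx : x ≠ 0)
    (δ : ℝ) :
    deriv (fun d => gammaCombinationCDF u₁ u₂ (a₁ + d / u₁) (a₂ - d / u₂) x) δ =
      ((a₁ + δ / u₁) - (a₂ - δ / u₂)) * deriv (deriv
        (gammaCombinationCDF (u₁ + 1) (u₂ + 1) (a₁ + δ / u₁) (a₂ - δ / u₂))) x := by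
  rcases hx.lt_or_gt with hneg | hpos
  · have hreflect (d : ℝ) : gammaCombinationCDF u₁ u₂ (a₁ + d / u₁) (a₂ - d / u₂) x =
        1 - gammaCombinationCDF u₁ u₂ (-a₁ + -d / u₁) (-a₂ - -d / u₂) (-x) := by
      rw [← gammaCombinationCDF_neg hu₁ hu₂ (neg_ne_zero.2 hx), neg_neg]
      congr 1 <;> ring
    have h := deriv_gammaCombinationCDF_perturb_of_pos (a₁ := -a₁) (a₂ := -a₂) hu₁ hu₂
      (neg_pos.2 hneg) (-δ)
    rw [show -a₁ + -δ / u₁ = -(a₁ + δ / u₁) by ring, show -a₂ - -δ / u₂ = -(a₂ - δ / u₂) by ring,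
      deriv_deriv_gammaCombinationCDF_neg (add_pos hu₁ one_pos) (add_pos hu₂ one_pos) hx] at h
    simp only [hreflect, deriv_const_sub]
    rw [deriv_comp_neg fun d => gammaCombinationCDF u₁ u₂ (-a₁ + d / u₁) (-a₂ - d / u₂) (-x), h]
    ring
  · exact deriv_gammaCombinationCDF_perturb_of_pos hu₁ hu₂ hpos δ

lemma monotone_gammaCombinationCDF (hu₁ : 0 < u₁) (hu₂ : 0 < u₂) :
    Monotone (gammaCombinationCDF u₁ u₂ a₁ a₂) := by
  have := isProbabilityMeasure_gammaMeasure hu₁ one_pos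
  have := isProbabilityMeasure_gammaMeasure hu₂ one_pos
  exact fun x y hxy => measureReal_mono fun p hp => le_trans hp hxy

lemma gammaCombinationCDF_of_nonpos (hu₁ : 0 < u₁) (hu₂ : 0 < u₂) (ha₁ : 0 ≤ a₁) (ha₂ : 0 ≤ a₂)
    (ha : 0 < a₁ + a₂) (hx : x ≤ 0) : gammaCombinationCDF u₁ u₂ a₁ a₂ x = 0 := by
  have := isProbabilityMeasure_gammaMeasure hu₁ one_pos
  have := isProbabilityMeasure_gammaMeasure hu₂ one_pos
  refine (measureReal_congr (eventuallyEq_empty.2 ?_)).trans measureReal_empty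
  filter_upwards [Measure.quasiMeasurePreserving_fst.ae ae_gammaMeasure_pos,
    Measure.quasiMeasurePreserving_snd.ae ae_gammaMeasure_pos] with p hp₁ hp₂
  refine not_le.2 (hx.trans_lt ?_)
  rcases ha₁.eq_or_lt with rfl | ha₁
  · rw [zero_add] at ha
    positivity
  · positivity

lemma deriv_deriv_gammaCombinationCDF_zero (hu₁ : 0 < u₁) (hu₂ : 0 < u₂) (ha₁ : 0 ≤ a₁)
    (ha₂ : 0 ≤ a₂) (ha : 0 < a₁ + a₂) :
    deriv (deriv (gammaCombinationCDF u₁ u₂ a₁ a₂)) 0 = 0 := by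
  have hzero : deriv (gammaCombinationCDF u₁ u₂ a₁ a₂) 0 = 0 := by
    refine IsLocalMin.deriv_eq_zero (Eventually.of_forall fun y => ?_)
    rw [gammaCombinationCDF_of_nonpos hu₁ hu₂ ha₁ ha₂ ha le_rfl]
    exact measureReal_nonneg
  refine IsLocalMin.deriv_eq_zero (Eventually.of_forall fun y => ?_)
  rw [hzero]
  exact (monotone_gammaCombinationCDF hu₁ hu₂).deriv_nonneg

/-- At `δ` the left-hand probability is `0` or `1`, hence extremal in `d`, so both sides vanish
whether or not the derivatives exist. -/
lemma deriv_gammaCombinationCDF_perturb_zero (hu₁ : 0 < u₁) (hu₂ : 0 < u₂) {δ : ℝ}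
    (ha₁ : 0 ≤ a₁ + δ / u₁) (ha₂ : 0 ≤ a₂ - δ / u₂) :
    deriv (fun d => gammaCombinationCDF u₁ u₂ (a₁ + d / u₁) (a₂ - d / u₂) 0) δ =
      ((a₁ + δ / u₁) - (a₂ - δ / u₂)) * deriv (deriv
        (gammaCombinationCDF (u₁ + 1) (u₂ + 1) (a₁ + δ / u₁) (a₂ - δ / u₂))) 0 := by
  rcases (add_nonneg ha₁ ha₂).eq_or_lt with ha | ha
  · obtain ⟨h₁, h₂⟩ := (add_eq_zero_iff_of_nonneg ha₁ ha₂).1 ha.symm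
    have := isProbabilityMeasure_gammaMeasure hu₁ one_pos
    have := isProbabilityMeasure_gammaMeasure hu₂ one_pos
    rw [h₁, h₂, sub_zero, zero_mul]
    refine IsLocalMax.deriv_eq_zero (Eventually.of_forall fun d => ?_)
    simp only [gammaCombinationCDF, h₁, h₂, zero_mul, add_zero, le_refl, ofPred_true,
      probReal_univ]
    exact measureReal_le_one
  · rw [deriv_deriv_gammaCombinationCDF_zero (add_pos hu₁ one_pos) (add_pos hu₂ one_pos) ha₁ ha₂ ha,
      mul_zero]
    refine IsLocalMin.deriv_eq_zero (Eventually.of_forall fun d => ?_)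
    beta_reduce
    rw [gammaCombinationCDF_of_nonpos hu₁ hu₂ ha₁ ha₂ ha le_rfl]
    exact measureReal_nonneg

end GammaCombination

section Law

variable {Ω : Type*} {mΩ : MeasurableSpace Ω} {P : Measure Ω} {u u₁ u₂ r : ℝ} {X Y : Ω → ℝ}

lemma hasLaw_add_gammaMeasure_expMeasure (hu : 0 < u) (hr : 0 < r)
    (hX : HasLaw X (gammaMeasure u r) P) (hY : HasLaw Y (expMeasure r) P) (hXY : IndepFun X Y P) :
    HasLaw (fun ω => X ω + Y ω) (gammaMeasure (u + 1) r) P := by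
  rw [← gammaMeasure_conv_gammaMeasure hu one_pos hr]
  have := isProbabilityMeasure_gammaMeasure hu hr
  have := isProbabilityMeasure_gammaMeasure one_pos hr
  exact hXY.hasLaw_fun_add hX hY

lemma measureReal_le_eq_gammaCombinationCDF [IsFiniteMeasure P]
    (hX : HasLaw X (gammaMeasure u₁ 1) P) (hY : HasLaw Y (gammaMeasure u₂ 1) P)
    (hXY : IndepFun X Y P) (a₁ a₂ x : ℝ) :
    P.real {ω | a₁ * X ω + a₂ * Y ω ≤ x} = gammaCombinationCDF u₁ u₂ a₁ a₂ x :=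
  (hXY.hasLaw_prod hX hY).measureReal_eq (p := fun p : ℝ × ℝ => a₁ * p.1 + a₂ * p.2 ≤ x)
    (measurableSet_le (by fun_prop) (by fun_prop))

end Law

lemma hasLaw_eval_pi {ι : Type*} [Fintype ι] {𝓧 : ι → Type*} [∀ i, MeasurableSpace (𝓧 i)]
    {κ : ∀ i, Measure (𝓧 i)} [∀ i, IsProbabilityMeasure (κ i)] (i : ι) :
    HasLaw (fun v : ∀ i, 𝓧 i => v i) (κ i) (Measure.pi κ) :=
  (measurePreserving_eval κ i).hasLaw

lemma iIndepFun_eval_pi_fin_four {𝓧 : Type*} [MeasurableSpace 𝓧] {κ : Fin 4 → Measure 𝓧}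
    [∀ i, IsProbabilityMeasure (κ i)] :
    iIndepFun ![fun v => v 0, fun v => v 1, fun v => v 2, fun v => v 3] (Measure.pi κ) := by
  convert! iIndepFun_pi (μ := κ) (X := fun _ x => x) fun _ => aemeasurable_id with i
  fin_cases i <;> rfl

theorem perturbation_derivative_identity_general {Ω : Type*} {mΩ : MeasurableSpace Ω}
    {P : Measure Ω} {u₁ u₂ : ℝ} (hu₁ : 0 < u₁) (hu₂ : 0 < u₂) {G₁ G₂ Z₁ Z₂ : Ω → ℝ}
    (hG₁ : HasLaw G₁ (gammaMeasure u₁ 1) P) (hG₂ : HasLaw G₂ (gammaMeasure u₂ 1) P)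
    (hZ₁ : HasLaw Z₁ (expMeasure 1) P) (hZ₂ : HasLaw Z₂ (expMeasure 1) P)
    (hind : iIndepFun ![G₁, G₂, Z₁, Z₂] P) (a₁ a₂ δ x : ℝ)
    (hx : x = 0 → 0 ≤ a₁ + δ / u₁ ∧ 0 ≤ a₂ - δ / u₂) :
    deriv (fun d => P.real {ω | (a₁ + d / u₁) * G₁ ω + (a₂ - d / u₂) * G₂ ω ≤ x}) δ =
      ((a₁ + δ / u₁) - (a₂ - δ / u₂)) * deriv (deriv fun y => P.real
        {ω | (a₁ + δ / u₁) * (G₁ ω + Z₁ ω) + (a₂ - δ / u₂) * (G₂ ω + Z₂ ω) ≤ y}) x := by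
  have hmeas : ∀ i, AEMeasurable (![G₁, G₂, Z₁, Z₂] i) P := by
    simp [Fin.forall_fin_succ, hG₁.aemeasurable, hG₂.aemeasurable, hZ₁.aemeasurable,
      hZ₂.aemeasurable]
  have := hind.isProbabilityMeasure
  have hGZ₁ := hasLaw_add_gammaMeasure_expMeasure hu₁ one_pos hG₁ hZ₁
    (hind.indepFun (i := 0) (j := 2) (by decide))
  have hGZ₂ := hasLaw_add_gammaMeasure_expMeasure hu₂ one_pos hG₂ hZ₂
    (hind.indepFun (i := 1) (j := 3) (by decide))
  have hindG : IndepFun G₁ G₂ P := hind.indepFun (i := 0) (j := 1) (by decide)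
  have hindGZ : IndepFun (fun ω => G₁ ω + Z₁ ω) (fun ω => G₂ ω + Z₂ ω) P :=
    (hind.indepFun_prodMk_prodMk₀ hmeas 0 2 1 3 (by decide) (by decide) (by decide)
      (by decide)).comp measurable_add measurable_add
  simp only [measureReal_le_eq_gammaCombinationCDF hG₁ hG₂ hindG,
    measureReal_le_eq_gammaCombinationCDF hGZ₁ hGZ₂ hindGZ]
  rcases eq_or_ne x 0 with rfl | hx0
  · exact deriv_gammaCombinationCDF_perturb_zero hu₁ hu₂ (hx rfl).1 (hx rfl).2
  · exact deriv_gammaCombinationCDF_perturb_of_ne_zero hu₁ hu₂ hx0 δ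

end Perturbation

/-- Fix u₁, u₂ > 0 and a₁*, a₂* ≥ 0, and for a real parameter δ set
a₁ = a₁* + δ/u₁, a₂ = a₂* - δ/u₂.  With G₁ ~ Gamma(u₁,1), G₂ ~ Gamma(u₂,1),
Z₁, Z₂ ~ Exp(1) all independent (realized as coordinates of a product measure μ),
F(δ,x) = P(a₁G₁ + a₂G₂ ≤ x) and H(δ,x) = P(a₁(G₁+Z₁) + a₂(G₂+Z₂) ≤ x) satisfy
∂/∂δ F(δ,x) = (a₁ - a₂) ∂²/∂x² H(δ,x). -/
theorem perturbation_derivative_identity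
    (u₁ u₂ : ℝ) (hu₁ : 0 < u₁) (hu₂ : 0 < u₂)
    (a₁s a₂s : ℝ) (ha₁s : 0 ≤ a₁s) (ha₂s : 0 ≤ a₂s)
    (μ : Measure (Fin 4 → ℝ))
    (hμ : μ = Measure.pi
      ![gammaMeasure u₁ 1, gammaMeasure u₂ 1, expMeasure 1, expMeasure 1])
    (F H : ℝ → ℝ → ℝ)
    (hF : ∀ δ x, F δ x
      = (μ {v | (a₁s + δ / u₁) * v 0 + (a₂s - δ / u₂) * v 1 ≤ x}).toReal)
    (hH : ∀ δ x, H δ x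
      = (μ {v | (a₁s + δ / u₁) * (v 0 + v 2) + (a₂s - δ / u₂) * (v 1 + v 3) ≤ x}).toReal)
    (δ : ℝ) (ha₁ : 0 ≤ a₁s + δ / u₁) (ha₂ : 0 ≤ a₂s - δ / u₂) (x : ℝ) :
    deriv (fun d => F d x) δ
      = ((a₁s + δ / u₁) - (a₂s - δ / u₂)) * deriv (fun y => deriv (H δ) y) x := by
  subst hμ
  obtain rfl := funext₂ hF
  obtain rfl := funext₂ hH
  let κ : Fin 4 → Measure ℝ := ![gammaMeasure u₁ 1, gammaMeasure u₂ 1, expMeasure 1, expMeasure 1]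
  have : ∀ i, IsProbabilityMeasure (κ i) := by
    simp [κ, Fin.forall_fin_succ, isProbabilityMeasure_gammaMeasure,
      isProbabilityMeasure_expMeasure, hu₁, hu₂]
  have hlaw := hasLaw_eval_pi (κ := κ)
  exact perturbation_derivative_identity_general hu₁ hu₂ (hlaw 0) (hlaw 1) (hlaw 2) (hlaw 3)
    iIndepFun_eval_pi_fin_four a₁s a₂s δ x fun _ => ⟨ha₁, ha₂⟩
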